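/- Let D be a domain in ℂⁿ and let φ be a psh peak function for a point p ∈ ∂D. Then for any bounded open neighborhood U of p there exist an open neighborhood V ⊂ U of p and a constant m > 0 such that for all z ∈ D ∩ V and all X ∈ ℂⁿ one has A_D(z;X) ≥ e^{mφ(z)} A_{D∩U}(z;X). -/

import Mathlib

open Set Metric Filter Topology
open scoped Classical

noncomputable section

/-- `ℂⁿ` with the Euclidean norm. -/
abbrev Cn (n : ℕ) := EuclideanSpace ℂ (Fin n)

/-- A function `u : ℂⁿ → [-∞,∞)` (with values in `EReal`) is plurisubharmonic on `D` if it
is upper semicontinuous on `D` and satisfies the sub-mean-value inequality on every closed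
disc in a complex line contained in `D` (stated via continuous majorants on the boundary
circle, so as to handle the value `-∞`). -/
def PSHOn {n : ℕ} (u : Cn n → EReal) (D : Set (Cn n)) : Prop :=
  UpperSemicontinuousOn u D ∧
  ∀ a ∈ D, ∀ b : Cn n, ∀ r : ℝ, 0 < r →
    (∀ t : ℂ, ‖t‖ ≤ r → a + t • b ∈ D) →
    ∀ g : ℝ → ℝ, Continuous g →
      (∀ θ : ℝ, u (a + ((r : ℂ) * Complex.exp (θ * Complex.I)) • b) ≤ (g θ : EReal)) →
      u a ≤ (((1 / (2 * Real.pi)) * ∫ θ in (0:ℝ)..(2 * Real.pi), g θ : ℝ) : EReal)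

/-- `φ` is a plurisubharmonic peak function for `D` at the boundary point `p`:
`φ` is psh on `D`, `φ(z) → 0` as `z → p` in `D`, and `sup_{D∖U} φ < 0` for every
neighborhood `U` of `p`. -/
def IsPshPeakFn {n : ℕ} (D : Set (Cn n)) (p : Cn n) (φ : Cn n → EReal) : Prop :=
  PSHOn φ D ∧ Tendsto φ (𝓝[D] p) (𝓝 (0 : EReal)) ∧
  ∀ U ∈ 𝓝 p, ∃ c : ℝ, c < 0 ∧ ∀ z ∈ D \ U, φ z ≤ (c : EReal)

/-- The real exponential extended to `EReal`, with `exp(-∞) = 0` (the value at `⊤`,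
irrelevant here, is also set to `0`). -/
def erexp (x : EReal) : ℝ := if x = ⊥ then 0 else if x = ⊤ then 0 else Real.exp x.toReal

/-- The pluricomplex Green function of `D` with pole at `z`:
`g_D(z,w) = sup {u(w) : u psh on D, u < 0, u ≤ log‖·-z‖ + C near z for some C}`. -/
def greenFn {n : ℕ} (D : Set (Cn n)) (z w : Cn n) : EReal :=
  sSup {t : EReal | ∃ u : Cn n → EReal, PSHOn u D ∧ (∀ x ∈ D, u x < 0) ∧
    (∃ C : ℝ, ∀ᶠ x in 𝓝[D] z, u x ≤ ((Real.log ‖x - z‖ + C : ℝ) : EReal)) ∧ t = u w}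

/-- The Azukawa metric of `D`:
`A_D(z;X) = limsup_{λ→0, λ≠0} exp(g_D(z, z+λX)) / |λ|`. -/
def azukawa {n : ℕ} (D : Set (Cn n)) (z X : Cn n) : ℝ :=
  Filter.limsup (fun lam : ℂ => erexp (greenFn D z (z + lam • X)) / ‖lam‖) (𝓝[≠] (0:ℂ))

/-!
Let `g_D` and `g_{D ∩ U}` denote Green functions with pole `z` near `p`, where `U` may be taken to
be a ball. If `u` competes for `g_{D ∩ U}` and `R ≥ diam U`, then
`max (u, log (‖· - z‖ / R)) + m φ` competes for `g_D` once it is glued to a constant: `φ` is bounded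
away from `0` off a neighbourhood of `p`, so for large `m` this function is below a suitable
constant near `∂U` and above it between two small balls about `p`. Hence `g_{D ∩ U} + m φ ≤ g_D`
near `p`.

To pass to the Azukawa metrics one divides by `|l|` along `z + l X` and lets `l → 0`; upper
semicontinuity of `φ` at `z` goes in the wrong direction for a pointwise comparison. Instead, let
`B > A_D(z; X)` and fix a small circle `|l| = s` on which `g_D < log (B s)`. There
`u < min (0, log (B s) - m φ)`, so an entire function `P` has real part in between on that circle;
since `Re P + m φ ≤ log (B s)` holds on the circle, it holds at the centre. The maximum principle
gives `u ≤ log |l| - log s + Re P` in the disc, and Harnack's inequality bounds `Re P` near the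
centre.
-/

section Interpolation

theorem exists_continuous_between {X : Type*} [TopologicalSpace X] [NormalSpace X]
    [ParacompactSpace X] {f h : X → EReal} (hf : UpperSemicontinuous f)
    (hh : LowerSemicontinuous h) (hfh : ∀ x, f x < h x) :
    ∃ G : C(X, ℝ), ∀ x, f x < G x ∧ G x < h x := by
  refine exists_continuous_forall_mem_convex_of_local_const
    (t := fun x => {y : ℝ | f x < y ∧ (y : EReal) < h x}) (fun x => ?_) fun x => ?_
  · refine OrdConnected.convex ⟨fun a ha b hb y hy => ⟨?_, ?_⟩⟩
    · exact ha.1.trans_le (EReal.coe_le_coe hy.1)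
    · exact (EReal.coe_le_coe hy.2).trans_lt hb.2
  · obtain ⟨y, hfy, hyh⟩ := EReal.lt_iff_exists_real_btwn.1 (hfh x)
    exact ⟨y, (hf x y hfy).and (hh x y hyh)⟩

theorem exists_entire_add_conj_eq_of_mem_span_fourier {q : C(AddCircle (2 * Real.pi), ℂ)}
    (hq : q ∈ Submodule.span ℂ (range (@fourier (2 * Real.pi)))) :
    ∃ P Q : ℂ → ℂ, Differentiable ℂ P ∧ Differentiable ℂ Q ∧
      ∀ x, q x = P x.toCircle + starRingEnd ℂ (Q x.toCircle) := by
  induction hq using Submodule.span_induction with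
  | mem x hx =>
    obtain ⟨k, rfl⟩ := hx
    obtain ⟨j, rfl | rfl⟩ := k.eq_nat_or_neg
    · exact ⟨fun z => z ^ j, 0, by fun_prop, by fun_prop, fun x => by
        simp [fourier_apply, AddCircle.toCircle_nsmul]⟩
    · refine ⟨0, fun z => z ^ j, by fun_prop, by fun_prop, fun x => ?_⟩
      simp [fourier_apply, AddCircle.toCircle_neg, AddCircle.toCircle_nsmul,
        ← Circle.coe_inv_eq_conj]
  | zero => exact ⟨0, 0, by fun_prop, by fun_prop, by simp⟩
  | add x y _ _ hx hy =>
    obtain ⟨P, Q, hP, hQ, hx⟩ := hx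
    obtain ⟨P', Q', hP', hQ', hy⟩ := hy
    refine ⟨P + P', Q + Q', hP.add hP', hQ.add hQ', fun w => ?_⟩
    simp only [ContinuousMap.add_apply, Pi.add_apply, map_add, hx, hy]
    ring
  | smul a x _ hx =>
    obtain ⟨P, Q, hP, hQ, hx⟩ := hx
    refine ⟨a • P, starRingEnd ℂ a • Q, hP.const_smul _, hQ.const_smul _, fun w => ?_⟩
    simp only [ContinuousMap.smul_apply, Pi.smul_apply, smul_eq_mul, map_mul, Complex.conj_conj,
      hx]
    ring

theorem exists_entire_abs_re_sub_lt_on_circle (G : C(Circle, ℝ)) {ε : ℝ} (hε : 0 < ε) :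
    ∃ P : ℂ → ℂ, Differentiable ℂ P ∧ ∀ x : Circle, |(P x).re - G x| < ε := by
  have : Fact (0 < 2 * Real.pi) := ⟨Real.two_pi_pos⟩
  let g : C(AddCircle (2 * Real.pi), ℂ) :=
    ⟨fun x => (G x.toCircle : ℂ), by
      have : Continuous (AddCircle.toCircle (T := 2 * Real.pi)) := AddCircle.continuous_toCircle
      fun_prop⟩
  have hg : g ∈ closure (Submodule.span ℂ (range (@fourier (2 * Real.pi))) : Set _) := by
    rw [← Submodule.topologicalClosure_coe, span_fourier_closure_eq_top]
    trivial
  obtain ⟨q, hq, hgq⟩ := Metric.mem_closure_iff.1 hg ε hε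
  obtain ⟨P, Q, hP, hQ, hPQ⟩ := exists_entire_add_conj_eq_of_mem_span_fourier hq
  refine ⟨P + Q, hP.add hQ, fun x => ?_⟩
  obtain ⟨y, rfl⟩ := (AddCircle.homeomorphCircle Real.two_pi_pos.ne').surjective x
  rw [AddCircle.homeomorphCircle_apply]
  calc |((P + Q) y.toCircle).re - G y.toCircle|
      = |(q y - g y).re| := by simp [hPQ, g]
    _ ≤ ‖q y - g y‖ := Complex.abs_re_le_norm _
    _ ≤ dist q g := by rw [← dist_eq_norm]; exact ContinuousMap.dist_apply_le_dist y
    _ < ε := by rwa [dist_comm]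

theorem exists_entire_re_between {r : ℝ} (hr : 0 < r) {f h : ℂ → EReal}
    (hf : UpperSemicontinuousOn f (sphere 0 r)) (hh : LowerSemicontinuousOn h (sphere 0 r))
    (hfh : ∀ w ∈ sphere 0 r, f w < h w) :
    ∃ P : ℂ → ℂ, Differentiable ℂ P ∧ ∀ w ∈ sphere 0 r, f w < (P w).re ∧ (P w).re < h w := by
  have hc : ContinuousOn (fun x : Circle => (r : ℂ) * x) univ := by fun_prop
  have hmem : MapsTo (fun x : Circle => (r : ℂ) * x) univ (sphere 0 r) := fun x _ => by
    simp [abs_of_pos hr, Circle.norm_coe]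
  have hh' := lowerSemicontinuousOn_univ_iff.1 (hh.comp hc hmem)
  obtain ⟨G, hG⟩ := exists_continuous_between (upperSemicontinuousOn_univ_iff.1 (hf.comp hc hmem))
    hh' fun x => hfh _ (hmem (mem_univ x))
  obtain ⟨G', hG'⟩ := exists_continuous_between (f := fun x => G x)
    (continuous_coe_real_ereal.comp G.continuous).upperSemicontinuous hh' fun x => (hG x).2
  obtain ⟨x₀, -, hx₀⟩ := isCompact_univ.exists_isMinOn univ_nonempty
    (G'.continuous.sub G.continuous).continuousOn
  have hgap : 0 < (G' x₀ - G x₀) / 2 :=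
    half_pos (sub_pos.2 (EReal.coe_lt_coe_iff.1 (hG' x₀).1))
  obtain ⟨P, hP, hPG⟩ := exists_entire_abs_re_sub_lt_on_circle ((1 / 2 : ℝ) • (G + G')) hgap
  refine ⟨fun w => P (w / r), hP.comp (by fun_prop), fun w hw => ?_⟩
  obtain ⟨x, rfl⟩ : ∃ x : Circle, (r : ℂ) * x = w :=
    ⟨⟨w / r, by simpa [Submonoid.unitSphere, abs_of_pos hr, div_eq_one_iff_eq hr.ne'] using hw⟩,
      mul_div_cancel₀ _ (by exact_mod_cast hr.ne')⟩
  have hx : G' x₀ - G x₀ ≤ G' x - G x := hx₀ (mem_univ x)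
  have hPx := abs_lt.1 (hPG x)
  simp only [ContinuousMap.smul_apply, ContinuousMap.add_apply, smul_eq_mul] at hPx
  beta_reduce
  rw [mul_div_cancel_left₀ _ (by exact_mod_cast hr.ne')]
  exact ⟨(hG x).1.trans (EReal.coe_lt_coe (by linarith)),
    (EReal.coe_lt_coe (by linarith)).trans (hG' x).2⟩

end Interpolation

section Subharmonic

open InnerProductSpace

/-- `v` is subharmonic on `Ω`: it is upper semicontinuous, and on every closed disc in `Ω` a
harmonic majorant of `v` on the boundary circle majorizes `v` at the centre. Values `±∞` are
allowed. -/
def SubharmonicOn (v : ℂ → EReal) (Ω : Set ℂ) : Prop :=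
  UpperSemicontinuousOn v Ω ∧ ∀ c r, 0 < r → closedBall c r ⊆ Ω → ∀ h : ℂ → ℝ,
    HarmonicOnNhd h (closedBall c r) → (∀ w ∈ sphere c r, v w ≤ h w) → v c ≤ h c

variable {v : ℂ → EReal} {q : ℂ → ℝ}

theorem SubharmonicOn.mono {Ω Ω' : Set ℂ} (hv : SubharmonicOn v Ω) (h : Ω' ⊆ Ω) :
    SubharmonicOn v Ω' :=
  ⟨hv.1.mono h, fun c r hr hcr => hv.2 c r hr (hcr.trans h)⟩

theorem SubharmonicOn.exists_sphere_lt {Ω : Set ℂ} (hv : SubharmonicOn v Ω) {x : ℂ} {t A η : ℝ}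
    (ht : 0 < t) (htΩ : closedBall x t ⊆ Ω) (hq : HarmonicOnNhd q (closedBall x t))
    (hη : 0 < η) (hA : v x = A) :
    ∃ y ∈ sphere x t, v x + (η * ‖x‖ ^ 2 - q x : ℝ) < v y + (η * ‖y‖ ^ 2 - q y : ℝ) := by
  by_contra! hmax
  let L : ℂ → ℂ := fun y => (A - q x - η * t ^ 2 : ℝ) - (2 * η : ℝ) * (starRingEnd ℂ x * (y - x))
  have hQ : HarmonicOnNhd (q + fun y => (L y).re) (closedBall x t) :=
    hq.add fun y _ => AnalyticAt.harmonicAt_re (by fun_prop)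
  have hL (y : ℂ) : (L y).re = A - q x - η * t ^ 2 - 2 * η * (starRingEnd ℂ x * (y - x)).re := by
    simp only [L, Complex.sub_re, Complex.ofReal_re, Complex.re_ofReal_mul]
  have hsphere (y : ℂ) (hy : y ∈ sphere x t) : v y ≤ (q + fun y => (L y).re) y := by
    have hnorm : ‖y‖ ^ 2 = ‖x‖ ^ 2 + t ^ 2 + 2 * (starRingEnd ℂ x * (y - x)).re := by
      rw [← mem_sphere_iff_norm.1 hy]
      simp only [Complex.sq_norm, Complex.normSq_apply, Complex.mul_re, Complex.conj_re,
        Complex.conj_im, Complex.sub_re, Complex.sub_im]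
      ring
    have h := hmax y hy
    rw [hA, ← EReal.coe_add, ← EReal.le_sub_iff_add_le (.inl (EReal.coe_ne_bot _))
      (.inl (EReal.coe_ne_top _)), ← EReal.coe_sub] at h
    refine h.trans_eq (congrArg _ ?_)
    rw [Pi.add_apply, hL, hnorm]
    ring
  have hx := hv.2 x t ht htΩ _ hQ hsphere
  rw [hA, EReal.coe_le_coe_iff, Pi.add_apply, hL, sub_self, mul_zero, Complex.zero_re] at hx
  have : 0 < η * t ^ 2 := by positivity
  linarith

theorem subharmonic_le_harmonic {K O : Set ℂ} (hK : IsCompact K) (hO : IsOpen O)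
    (hOK : O ⊆ K) (hvK : UpperSemicontinuousOn v K) (hvtop : ∀ x ∈ K, v x < ⊤)
    (hqK : ContinuousOn q K) (hv : ∀ x ∈ O, ∃ Ω ∈ 𝓝 x, SubharmonicOn v Ω)
    (hq : HarmonicOnNhd q O) (hb : ∀ x ∈ K \ O, v x ≤ q x) : ∀ x ∈ K, v x ≤ q x := by
  by_contra! ⟨w, hw, hqv⟩
  lift v w to ℝ using ⟨(hvtop w hw).ne, ne_bot_of_gt hqv⟩ with a ha
  rw [EReal.coe_lt_coe_iff] at hqv
  obtain ⟨B, hB⟩ := hK.bddAbove_image (f := fun x : ℂ => ‖x‖ ^ 2) (by fun_prop)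
  replace hB (x : ℂ) (hx : x ∈ K) : ‖x‖ ^ 2 ≤ B := hB (mem_image_of_mem _ hx)
  obtain ⟨η, hη, hηB⟩ : ∃ η : ℝ, 0 < η ∧ B * η < a - q w :=
    exists_pos_mul_lt (sub_pos.2 hqv) B
  have hF : UpperSemicontinuousOn (fun x => v x + ((η * ‖x‖ ^ 2 - q x : ℝ) : EReal)) K :=
    hvK.add' (continuous_coe_real_ereal.comp_continuousOn (by fun_prop)).upperSemicontinuousOn
      fun x _ => EReal.continuousAt_add (.inr (EReal.coe_ne_bot _)) (.inr (EReal.coe_ne_top _))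
  obtain ⟨x, hx, hmax⟩ := hF.exists_isMaxOn ⟨w, hw⟩ hK
  have hwx := hmax hw
  simp only [mem_ofPred_eq, ← ha, ← EReal.coe_add] at hwx
  have hxbot : v x ≠ ⊥ := fun h =>
    EReal.coe_ne_bot _ (le_bot_iff.1 (hwx.trans_eq (by rw [h, EReal.bot_add])))
  obtain ⟨A, hA⟩ : ∃ A : ℝ, v x = A :=
    ⟨(v x).toReal, (EReal.coe_toReal (hvtop x hx).ne hxbot).symm⟩
  have hxO : x ∈ O := by
    by_contra hxO
    have hAq := hb x ⟨hx, hxO⟩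
    rw [hA] at hAq hwx
    norm_cast at hAq hwx
    have := mul_le_mul_of_nonneg_left (hB x hx) hη.le
    have : 0 ≤ η * ‖w‖ ^ 2 := by positivity
    linarith
  obtain ⟨Ω, hΩ, hvΩ⟩ := hv x hxO
  obtain ⟨t, ht, htK⟩ := Metric.nhds_basis_closedBall.mem_iff.1
    (inter_mem hΩ (hO.mem_nhds hxO))
  obtain ⟨y, hy, hlt⟩ := hvΩ.exists_sphere_lt ht (htK.trans inter_subset_left)
    (hq.mono (htK.trans inter_subset_right)) hη hA
  exact hlt.not_ge (hmax (hOK (htK (sphere_subset_closedBall hy)).2))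

end Subharmonic

section Plurisubharmonic

open InnerProductSpace

theorem lowerSemicontinuous_iInf_fiber {X Y β : Type*} [TopologicalSpace X] [TopologicalSpace Y]
    [T2Space Y] [CompleteLinearOrder β] [DenselyOrdered β] {K : Set X} (hK : IsCompact K)
    {c : X → Y} (hc : Continuous c) {g : X → β} (hg : LowerSemicontinuous g) :
    LowerSemicontinuous fun y => ⨅ x ∈ K ∩ c ⁻¹' {y}, g x := by
  intro y b hb
  obtain ⟨b', hbb', hb'⟩ := exists_between hb
  have hclosed : IsClosed (c '' (K ∩ g ⁻¹' Iic b')) :=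
    ((hK.inter_right (hg.isClosed_preimage b')).image hc).isClosed
  have hy : y ∉ c '' (K ∩ g ⁻¹' Iic b') := by
    rintro ⟨x, ⟨hxK, hx⟩, rfl⟩
    exact hb'.not_ge ((iInf₂_le x ⟨hxK, rfl⟩).trans hx)
  filter_upwards [hclosed.isOpen_compl.mem_nhds hy] with y' hy'
  exact hbb'.trans_le (le_iInf₂ fun x hx => le_of_not_ge fun hle => hy' ⟨x, ⟨hx.1, hle⟩, hx.2⟩)

theorem exists_entire_re_le_add {r : ℝ} (hr : 0 < r) {f : ℂ → EReal}
    (hf : UpperSemicontinuousOn f (sphere 0 r)) {g : ℝ → ℝ} (hg : Continuous g)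
    (hfg : ∀ θ, f (circleMap 0 r θ) ≤ g θ) {ε : ℝ} (hε : 0 < ε) :
    ∃ P : ℂ → ℂ, Differentiable ℂ P ∧ (∀ w ∈ sphere 0 r, f w ≤ (P w).re) ∧
      ∀ θ ∈ Icc 0 (2 * Real.pi), (P (circleMap 0 r θ)).re ≤ g θ + ε := by
  let h : ℂ → EReal := fun w =>
    ⨅ θ ∈ Icc 0 (2 * Real.pi) ∩ circleMap 0 r ⁻¹' {w}, ((g θ + ε : ℝ) : EReal)
  have hh : LowerSemicontinuous h :=
    lowerSemicontinuous_iInf_fiber isCompact_Icc (continuous_circleMap 0 r)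
      (continuous_coe_real_ereal.comp (hg.add continuous_const)).lowerSemicontinuous
  obtain ⟨m, hm⟩ := (isCompact_Icc (a := 0) (b := 2 * Real.pi)).bddBelow_image hg.continuousOn
  have hfh (w : ℂ) (hw : w ∈ sphere 0 r) : f w < h w := by
    obtain ⟨t, rfl⟩ : w ∈ range (circleMap 0 r) := by rwa [range_circleMap, abs_of_pos hr]
    have hle : max (f (circleMap 0 r t)) m + ε ≤ h (circleMap 0 r t) := by
      refine le_iInf₂ fun θ hθ => ?_
      rw [EReal.coe_add]
      refine add_le_add_left (max_le (hθ.2 ▸ hfg θ) ?_) _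
      exact EReal.coe_le_coe (hm (mem_image_of_mem _ hθ.1))
    have hlt : max (f (circleMap 0 r t)) m < max (f (circleMap 0 r t)) m + ε := by
      have htop := max_lt ((hfg t).trans_lt (EReal.coe_lt_top _)) (EReal.coe_lt_top m)
      lift max (f (circleMap 0 r t)) m to ℝ using
        ⟨htop.ne, ((EReal.bot_lt_coe m).trans_le (le_max_right _ _)).ne'⟩ with A
      exact EReal.coe_lt_coe (lt_add_of_pos_right A hε)
    exact (le_max_left _ _).trans_lt (hlt.trans_le hle)
  obtain ⟨P, hP, hfP⟩ := exists_entire_re_between hr hf (hh.lowerSemicontinuousOn _) hfh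
  refine ⟨P, hP, fun w hw => (hfP w hw).1.le, fun θ hθ => EReal.coe_le_coe_iff.1 ?_⟩
  exact (hfP _ (circleMap_mem_sphere 0 hr.le θ)).2.le.trans (iInf₂_le θ ⟨hθ, rfl⟩)

theorem re_zero_le_of_re_circleMap_le {P : ℂ → ℂ} (hP : Differentiable ℂ P) {r : ℝ} {g : ℝ → ℝ}
    (hg : Continuous g) (hPg : ∀ θ ∈ Icc 0 (2 * Real.pi), (P (circleMap 0 r θ)).re ≤ g θ) :
    (P 0).re ≤ 1 / (2 * Real.pi) * ∫ θ in 0..2 * Real.pi, g θ := by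
  have hmean := InnerProductSpace.HarmonicOnNhd.circleAverage_eq (f := fun w => (P w).re) (c := 0)
    (R := r) fun w _ => (hP.analyticAt w).harmonicAt_re
  have hcont : Continuous fun θ => (P (circleMap 0 r θ)).re :=
    Complex.continuous_re.comp (hP.continuous.comp (continuous_circleMap 0 r))
  rw [← hmean, Real.circleAverage_def, smul_eq_mul, ← one_div]
  exact mul_le_mul_of_nonneg_left (intervalIntegral.integral_mono_on Real.two_pi_pos.le
    (hcont.intervalIntegrable _ _) (hg.intervalIntegrable _ _) hPg) (by positivity)

variable {n : ℕ} {u : Cn n → EReal} {D : Set (Cn n)}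

theorem PSHOn.subharmonicOn_line (hu : PSHOn u D) (a b : Cn n) :
    SubharmonicOn (fun w : ℂ => u (a + w • b)) ((fun w : ℂ => a + w • b) ⁻¹' D) := by
  refine ⟨hu.1.comp (by fun_prop) fun w hw => hw, fun c r hr hcr h hh hle => ?_⟩
  have hcircle (θ : ℝ) : (circleMap c r θ) ∈ sphere c r := circleMap_mem_sphere c hr.le θ
  have hdisc (t : ℂ) (ht : ‖t‖ ≤ r) : a + c • b + t • b ∈ D := by
    have := @hcr (c + t) (by simpa using ht)
    rwa [mem_preimage, add_smul, ← add_assoc] at this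
  have hmean := InnerProductSpace.HarmonicOnNhd.circleAverage_eq (f := h) (c := c) (R := r)
    (by rwa [abs_of_pos hr])
  rw [← hmean, Real.circleAverage_def, smul_eq_mul, ← one_div]
  refine hu.2 _ (by simpa using hdisc 0 (by simpa using hr.le)) b r hr hdisc
    (fun θ => h (circleMap c r θ)) ?_ fun θ => ?_
  · exact hh.continuousOn.comp_continuous (continuous_circleMap c r)
      fun θ => sphere_subset_closedBall (hcircle θ)
  · have := hle _ (hcircle θ)
    simpa only [circleMap, add_smul, ← add_assoc] using this

theorem pshOn_iff_entire : PSHOn u D ↔ UpperSemicontinuousOn u D ∧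
    ∀ (a b : Cn n) (r : ℝ), 0 < r → (∀ w ∈ closedBall (0 : ℂ) r, a + w • b ∈ D) →
      ∀ P : ℂ → ℂ, Differentiable ℂ P →
        (∀ w ∈ sphere (0 : ℂ) r, u (a + w • b) ≤ (P w).re) → u a ≤ (P 0).re := by
  refine ⟨fun hu => ⟨hu.1, fun a b r hr hD P hP hle => ?_⟩, fun hu => ⟨hu.1, ?_⟩⟩
  · simpa using (hu.subharmonicOn_line a b).2 0 r hr hD (fun w => (P w).re)
      (fun w _ => (hP.analyticAt w).harmonicAt_re) hle
  · intro a _ b r hr hD g hg hug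
    set A := 1 / (2 * Real.pi) * ∫ θ in 0..2 * Real.pi, g θ
    refine EReal.le_of_forall_lt_iff_le.1 fun z hz => ?_
    have hD' (w : ℂ) (hw : w ∈ closedBall 0 r) : a + w • b ∈ D := hD w (by simpa using hw)
    have husc : UpperSemicontinuousOn (fun w : ℂ => u (a + w • b)) (sphere 0 r) :=
      hu.1.comp (by fun_prop) fun w hw => hD' w (sphere_subset_closedBall hw)
    have hε := sub_pos.2 (EReal.coe_lt_coe_iff.1 hz)
    obtain ⟨P, hP, huP, hPg⟩ := exists_entire_re_le_add hr husc hg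
      (fun θ => by simpa [circleMap] using hug θ) hε
    refine (hu.2 a b r hr hD' P hP huP).trans (EReal.coe_le_coe ?_)
    calc (P 0).re ≤ 1 / (2 * Real.pi) * ∫ θ in 0..2 * Real.pi, (g θ + (z - A)) :=
          re_zero_le_of_re_circleMap_le hP (hg.add continuous_const) hPg
      _ = z := by
          rw [intervalIntegral.integral_add (hg.intervalIntegrable _ _) (by simp),
            intervalIntegral.integral_const, mul_add]
          simp only [sub_zero, smul_eq_mul, A]
          field_simp
          ring

end Plurisubharmonic

section PSHOnOperations

variable {n : ℕ} {u v : Cn n → EReal} {D : Set (Cn n)}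

theorem lowerSemicontinuousOn_coe_sub {X : Type*} [TopologicalSpace X] {s : Set X} {g : X → ℝ}
    (hg : ContinuousOn g s) {f : X → EReal} (hf : UpperSemicontinuousOn f s) :
    LowerSemicontinuousOn (fun x => (g x : EReal) - f x) s :=
  (continuous_coe_real_ereal.comp_continuousOn hg).lowerSemicontinuousOn.add'
    (continuous_neg.comp_upperSemicontinuousOn_antitone hf fun _ _ h => EReal.neg_le_neg_iff.2 h)
    fun _ _ => EReal.continuousAt_add (.inl (EReal.coe_ne_top _)) (.inl (EReal.coe_ne_bot _))

theorem PSHOn.mono {E : Set (Cn n)} (hu : PSHOn u D) (h : E ⊆ D) : PSHOn u E :=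
  ⟨hu.1.mono h, fun a ha b r hr hE => hu.2 a (h ha) b r hr fun t ht => h (hE t ht)⟩

theorem PSHOn.congr (hu : PSHOn u D) (h : EqOn v u D) : PSHOn v D := by
  rw [pshOn_iff_entire] at hu ⊢
  refine ⟨fun x hx => (hu.1 x hx).congr_of_eventuallyEq hx
    (eventually_nhdsWithin_of_forall fun w hw y => by rw [h hw]), fun a b r hr hD P hP hle => ?_⟩
  · have ha : a ∈ D := by simpa using hD 0 (mem_closedBall_self hr.le)
    rw [h ha]
    exact hu.2 a b r hr hD P hP fun w hw =>
      (h (hD w (sphere_subset_closedBall hw))).symm.trans_le (hle w hw)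

theorem pshOn_const (c : ℝ) : PSHOn (fun _ => (c : EReal)) D := by
  refine ⟨upperSemicontinuousOn_const, fun a _ b r _ _ g hg hle => EReal.coe_le_coe ?_⟩
  have hint := intervalIntegral.integral_mono_on Real.two_pi_pos.le
    ((continuous_const (y := c)).intervalIntegrable (μ := MeasureTheory.volume) _ _)
    (hg.intervalIntegrable _ _) fun θ _ => EReal.coe_le_coe_iff.1 (hle θ)
  rw [intervalIntegral.integral_const, sub_zero, smul_eq_mul] at hint
  rwa [one_div, ← div_eq_inv_mul, le_div_iff₀ Real.two_pi_pos, mul_comm]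

theorem PSHOn.max (hu : PSHOn u D) (hv : PSHOn v D) : PSHOn (fun x => max (u x) (v x)) D := by
  rw [pshOn_iff_entire] at hu hv ⊢
  refine ⟨hu.1.sup hv.1, fun a b r hr hD P hP hle => max_le ?_ ?_⟩
  · exact hu.2 a b r hr hD P hP fun w hw => (le_max_left _ _).trans (hle w hw)
  · exact hv.2 a b r hr hD P hP fun w hw => (le_max_right _ _).trans (hle w hw)

theorem coe_mul_le_coe_iff {m : ℝ} (hm : 0 < m) {x : EReal} {y : ℝ} :
    (m : EReal) * x ≤ y ↔ x ≤ (y / m : ℝ) := by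
  rw [mul_comm, EReal.coe_div,
    EReal.le_div_iff_mul_le (EReal.coe_pos.2 hm) (EReal.coe_ne_top m)]

theorem PSHOn.coe_mul {m : ℝ} (hm : 0 < m) (hu : PSHOn u D) :
    PSHOn (fun x => (m : EReal) * u x) D := by
  rw [pshOn_iff_entire] at hu ⊢
  refine ⟨?_, fun a b r hr hD P hP hle => ?_⟩
  · have hcont : Continuous fun x : EReal => (m : EReal) * x :=
      continuous_iff_continuousAt.2 fun x => EReal.Tendsto.const_mul tendsto_id
        (.inl (EReal.coe_ne_bot m)) (.inl (EReal.coe_ne_top m))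
    exact hcont.comp_upperSemicontinuousOn hu.1 fun x y h =>
      mul_le_mul_of_nonneg_left h (EReal.coe_nonneg.2 hm.le)
  · simp only [coe_mul_le_coe_iff hm] at hle ⊢
    simpa using hu.2 a b r hr hD (fun w => P w / m) (hP.div_const _) (by simpa using hle)

theorem coe_le_coe_sub_comm {b c : ℝ} {x : EReal} :
    (b : EReal) ≤ c - x ↔ x ≤ (c - b : ℝ) := by
  induction x with
  | bot => simp
  | top => exact iff_of_false (by simp) (EReal.coe_lt_top _).not_ge
  | coe x =>
    rw [← EReal.coe_sub, EReal.coe_le_coe_iff, EReal.coe_le_coe_iff]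
    exact le_sub_comm

theorem PSHOn.add (hu : PSHOn u D) (hv : PSHOn v D) (hutop : ∀ x ∈ D, u x < ⊤)
    (hvtop : ∀ x ∈ D, v x < ⊤) : PSHOn (fun x => u x + v x) D := by
  rw [pshOn_iff_entire] at hu hv ⊢
  refine ⟨hu.1.add' hv.1 fun x hx => EReal.continuousAt_add (.inl (hutop x hx).ne)
    (.inr (hvtop x hx).ne), fun a b r hr hD G hG hle => ?_⟩
  refine EReal.le_of_forall_lt_iff_le.1 fun z hz => ?_
  have hε : 0 < z - (G 0).re := sub_pos.2 (EReal.coe_lt_coe_iff.1 hz)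
  have hD' (w : ℂ) (hw : w ∈ sphere 0 r) : a + w • b ∈ D := hD w (sphere_subset_closedBall hw)
  have hline : ContinuousOn (fun w : ℂ => a + w • b) (sphere 0 r) := by fun_prop
  have hGcont : Continuous fun w => (G w).re + (z - (G 0).re) :=
    (Complex.continuous_re.comp hG.continuous).add continuous_const
  obtain ⟨P, hP, huP⟩ := exists_entire_re_between (f := fun w : ℂ => u (a + w • b))
    (h := fun w => (((G w).re + (z - (G 0).re) : ℝ) : EReal) - v (a + w • b)) hr
    (hu.1.comp hline hD')
    (lowerSemicontinuousOn_coe_sub hGcont.continuousOn (hv.1.comp hline hD')) fun w hw => by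
      rw [EReal.lt_sub_iff_add_lt (.inr (hutop _ (hD' w hw)).ne) (.inl (hvtop _ (hD' w hw)).ne)]
      exact (hle w hw).trans_lt (EReal.coe_lt_coe (lt_add_of_pos_right _ hε))
  have hvP := hv.2 a b r hr hD (fun w => G w + (z - (G 0).re : ℝ) - P w) (by fun_prop)
    fun w hw => by simpa using coe_le_coe_sub_comm.1 (huP w hw).2.le
  have := add_le_add (hu.2 a b r hr hD P hP fun w hw => (huP w hw).1.le) hvP
  refine this.trans_eq ?_
  rw [← EReal.coe_add]
  simp

theorem PSHOn.of_locally (hutop : ∀ x ∈ D, u x < ⊤) (h : ∀ x ∈ D, ∃ W ∈ 𝓝 x, PSHOn u W) :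
    PSHOn u D := by
  have husc : UpperSemicontinuousOn u D := fun x hx => by
    obtain ⟨W, hW, hu⟩ := h x hx
    exact fun y hy => Eventually.filter_mono
      (nhdsWithin_le_nhds.trans (nhdsWithin_eq_nhds.2 hW).ge) (hu.1 x (mem_of_mem_nhds hW) y hy)
  refine pshOn_iff_entire.2 ⟨husc, fun a b r hr hD P hP hle => ?_⟩
  have hline : Continuous fun w : ℂ => a + w • b := by fun_prop
  have := subharmonic_le_harmonic (isCompact_closedBall 0 r) isOpen_ball ball_subset_closedBall
    (husc.comp hline.continuousOn hD) (fun w hw => hutop _ (hD w hw))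
    (Complex.continuous_re.comp hP.continuous).continuousOn
    (fun w hw => ?_) (fun w _ => (hP.analyticAt w).harmonicAt_re)
    (fun w hw => hle w (by simpa using hw)) 0 (mem_closedBall_self hr.le)
  · simpa using this
  · obtain ⟨W, hW, hu⟩ := h _ (hD w (ball_subset_closedBall hw))
    exact ⟨_, hline.continuousAt.preimage_mem_nhds hW, hu.subharmonicOn_line a b⟩

end PSHOnOperations

section LogDist

variable {n : ℕ} {z w : Cn n} {R : ℝ}

/-- The plurisubharmonic function `log (‖w - z‖ / R)` of `w`, with value `⊥` at `z`. -/
def logDist (z : Cn n) (R : ℝ) (w : Cn n) : EReal := ENNReal.log (ENNReal.ofReal (‖w - z‖ / R))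

theorem logDist_le_coe_iff {y : ℝ} : logDist z R w ≤ y ↔ ‖w - z‖ / R ≤ Real.exp y := by
  rw [logDist, ← EReal.log_exp y, ENNReal.log_le_log_iff, EReal.exp_coe,
    ENNReal.ofReal_le_ofReal_iff (Real.exp_pos y).le]

theorem logDist_of_ne (hR : 0 < R) (h : w ≠ z) :
    logDist z R w = (Real.log ‖w - z‖ - Real.log R : ℝ) := by
  have hwz : 0 < ‖w - z‖ := norm_sub_pos_iff.2 h
  rw [logDist, ENNReal.log_ofReal_of_pos (div_pos hwz hR), Real.log_div hwz.ne' hR.ne']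

theorem log_div_le_logDist {δ : ℝ} (hR : 0 < R) (hδ : 0 < δ) (h : δ ≤ ‖w - z‖) :
    (Real.log (δ / R) : ℝ) ≤ logDist z R w := by
  rw [logDist, ← ENNReal.log_ofReal_of_pos (div_pos hδ hR)]
  gcongr

theorem logDist_lt_zero (hR : 0 < R) (h : ‖w - z‖ < R) : logDist z R w < 0 := by
  rwa [logDist, ENNReal.log_lt_zero_iff, ENNReal.ofReal_lt_one, div_lt_one hR]

theorem pshOn_logDist (hR : 0 < R) {D : Set (Cn n)} : PSHOn (logDist z R) D := by
  refine pshOn_iff_entire.2 ⟨?_, fun a b r hr _ P hP hle => ?_⟩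
  · have hcont : Continuous (logDist z R) :=
      ENNReal.continuous_log.comp (ENNReal.continuous_ofReal.comp (by fun_prop))
    exact hcont.upperSemicontinuous.upperSemicontinuousOn _
  · set F : ℂ → Cn n := fun w => Complex.exp (-P w) • (a + w • b - z)
    have hnorm (w : ℂ) : ‖F w‖ ≤ R ↔ logDist z R (a + w • b) ≤ (P w).re := by
      rw [logDist_le_coe_iff, div_le_iff₀ hR, norm_smul, Complex.norm_exp, Complex.neg_re,
        Real.exp_neg, inv_mul_le_iff₀ (Real.exp_pos _)]
    have hmax : ‖F 0‖ ≤ R := by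
      refine Complex.norm_le_of_forall_mem_frontier_norm_le (U := ball (0 : ℂ) r) isBounded_ball
        (Differentiable.diffContOnCl (by fun_prop)) (fun w hw => (hnorm w).2 (hle w ?_))
        (subset_closure (mem_ball_self hr))
      rwa [frontier_ball _ hr.ne'] at hw
    simpa using (hnorm 0).1 hmax

end LogDist

section LogPole

open InnerProductSpace

variable {s : ℝ}

theorem SubharmonicOn.le_on_annulus {v : ℂ → EReal} (hv : SubharmonicOn v (closedBall 0 s))
    (hvtop : ∀ x ∈ closedBall 0 s, v x < ⊤) {d : ℝ} {q : ℂ → ℝ}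
    (hq : HarmonicOnNhd q (closedBall 0 s \ ball 0 d)) (hd : ∀ x : ℂ, ‖x‖ = d → v x ≤ q x)
    (hs : ∀ x : ℂ, ‖x‖ = s → v x ≤ q x) {x : ℂ} (hdx : d ≤ ‖x‖) (hxs : ‖x‖ ≤ s) :
    v x ≤ q x := by
  have hO : IsOpen (ball (0 : ℂ) s \ closedBall 0 d) := isOpen_ball.sdiff isClosed_closedBall
  have hOK : ball (0 : ℂ) s \ closedBall 0 d ⊆ closedBall 0 s \ ball 0 d :=
    sdiff_subset_sdiff ball_subset_closedBall ball_subset_closedBall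
  refine subharmonic_le_harmonic ((isCompact_closedBall 0 s).diff isOpen_ball) hO hOK
    (hv.1.mono sdiff_subset) (fun y hy => hvtop y hy.1) hq.continuousOn
    (fun y hy => ⟨_, hO.mem_nhds hy, hv.mono (hOK.trans sdiff_subset)⟩) (hq.mono hOK)
    (fun y hy => ?_) x ⟨by simpa using hxs, by simpa using hdx⟩
  simp only [Set.mem_sdiff, mem_closedBall_zero_iff, mem_ball_zero_iff, not_lt, not_and,
    not_le] at hy
  rcases hy.1.1.lt_or_eq with hys | hys
  · exact hd y (le_antisymm (hy.2 hys) hy.1.2)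
  · exact hs y hys

theorem SubharmonicOn.le_log_norm_add {v : ℂ → EReal} (hv : SubharmonicOn v (closedBall 0 s))
    (hvtop : ∀ l ∈ closedBall 0 s, v l < ⊤) {C : ℝ}
    (hC : ∀ᶠ l in 𝓝[≠] 0, v l ≤ (Real.log ‖l‖ + C : ℝ)) {h : ℂ → ℝ}
    (hh : HarmonicOnNhd h (closedBall 0 s))
    (hvh : ∀ l ∈ sphere 0 s, v l ≤ (Real.log s + h l : ℝ)) {l : ℂ} (hl : 0 < ‖l‖)
    (hls : ‖l‖ ≤ s) : v l ≤ (Real.log ‖l‖ + h l : ℝ) := by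
  refine EReal.le_of_forall_lt_iff_le.1 fun y hy => ?_
  obtain ⟨m, hm⟩ := (isCompact_closedBall (0 : ℂ) s).bddBelow_image hh.continuousOn
  obtain ⟨ε, hε, hεy⟩ := exists_pos_mul_lt (sub_pos.2 (EReal.coe_lt_coe_iff.1 hy))
    (Real.log s - Real.log ‖l‖)
  obtain ⟨δ, hδ, hδC⟩ := Metric.eventually_nhds_iff.1 (eventually_nhdsWithin_iff.1 hC)
  obtain ⟨d, hdlog, hd, hdδl⟩ := ((Real.tendsto_log_nhdsGT_zero.eventually_le_atBot
    (Real.log s - (C - m) / ε)).and (Ioo_mem_nhdsGT (lt_min hδ hl))).exists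
  obtain ⟨hdδ, hdl⟩ := lt_min_iff.1 hdδl
  let q : ℂ → ℝ := fun x => Real.log ‖x‖ + ε * (Real.log s - Real.log ‖x‖) + h x
  have hq : HarmonicOnNhd q (closedBall 0 s \ ball 0 d) := fun x hx => by
    have hx0 : x ≠ 0 := by
      rintro rfl
      exact hx.2 (mem_ball_self hd)
    have hlog : HarmonicAt (fun x : ℂ => Real.log ‖x‖) x := analyticAt_id.harmonicAt_log_norm hx0
    exact (hlog.add (((harmonicAt_const _).sub hlog).const_smul (c := ε))).add (hh x hx.1)
  have hinner (x : ℂ) (hx : ‖x‖ = d) : v x ≤ q x := by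
    have hmx : m ≤ h x := hm (mem_image_of_mem h (by simpa [hx] using hdl.le.trans hls))
    have hCm : C - m ≤ ε * (Real.log s - Real.log d) := by
      rw [← div_le_iff₀' hε]
      linarith
    refine (hδC (by simpa [hx] using hdδ) (norm_pos_iff.1 (hx ▸ hd))).trans (EReal.coe_le_coe ?_)
    simp only [q, hx]
    linarith
  refine (hv.le_on_annulus hvtop hq hinner (fun x hx => ?_) hdl.le hls).trans
    (EReal.coe_le_coe ?_)
  · simpa [q, hx] using hvh x (by simpa using hx)
  · simp only [q]
    linarith

theorem harmonic_le_mul_of_nonpos_on_sphere {f : ℂ → ℝ} {c w : ℂ} {R : ℝ}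
    (hf : HarmonicOnNhd f (closedBall c R)) (hf0 : ∀ x ∈ sphere c R, f x ≤ 0)
    (hw : w ∈ ball c R) : f w ≤ (R - ‖w - c‖) / (R + ‖w - c‖) * f c := by
  have hR : |R| = R := abs_of_pos (pos_of_mem_ball hw)
  have hfc : ContinuousOn f (sphere c |R|) :=
    hf.continuousOn.mono (hR.symm ▸ sphere_subset_closedBall)
  calc f w = Real.circleAverage ((Complex.re ∘ herglotzRieszKernel c w) • f) c R :=
        (hf.circleAverage_re_herglotzRieszKernel_smul hw).symm
    _ ≤ Real.circleAverage (((R - ‖w - c‖) / (R + ‖w - c‖)) • f) c R := by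
        refine Real.circleAverage_mono ?_ ?_ ?_
        · exact (((Complex.continuous_re.comp_continuousOn
            (continuousOn_herglotzRieszKernel_sphere hw)).smul hfc)).circleIntegrable'
        · exact (continuousOn_const.smul hfc).circleIntegrable'
        · intro x hx
          rw [hR] at hx
          exact mul_le_mul_of_nonpos_right (le_re_herglotzRieszKernel hx hw) (hf0 x hx)
    _ = (R - ‖w - c‖) / (R + ‖w - c‖) * f c := by
        rw [Real.circleAverage_smul, smul_eq_mul,
          InnerProductSpace.HarmonicOnNhd.circleAverage_eq (by rwa [hR])]

end LogPole

section GreenFunction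

open InnerProductSpace

variable {n : ℕ} {D : Set (Cn n)} {z X : Cn n} {u : Cn n → EReal} {s : ℝ}

/-- The competitors in the supremum defining the pluricomplex Green function of `D` with pole
`z`. -/
structure IsGreenCandidate (D : Set (Cn n)) (z : Cn n) (u : Cn n → EReal) : Prop where
  pshOn : PSHOn u D
  neg : ∀ x ∈ D, u x < 0
  pole : ∃ C : ℝ, ∀ᶠ x in 𝓝[D] z, u x ≤ (Real.log ‖x - z‖ + C : ℝ)

theorem IsGreenCandidate.le_greenFn (hu : IsGreenCandidate D z u) (w : Cn n) :
    u w ≤ greenFn D z w :=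
  le_sSup ⟨u, hu.pshOn, hu.neg, hu.pole, rfl⟩

theorem greenFn_le_iff {w : Cn n} {c : EReal} :
    greenFn D z w ≤ c ↔ ∀ u, IsGreenCandidate D z u → u w ≤ c := by
  refine ⟨fun h u hu => (hu.le_greenFn w).trans h, fun h => sSup_le ?_⟩
  rintro _ ⟨u, hpsh, hneg, hpole, rfl⟩
  exact h u ⟨hpsh, hneg, hpole⟩

theorem eventually_closedBall_line_mem (hD : IsOpen D) (hz : z ∈ D) (X : Cn n) :
    ∀ᶠ s in 𝓝 (0 : ℝ), ∀ t ∈ closedBall (0 : ℂ) s, z + t • X ∈ D := by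
  have hline : Continuous fun t : ℂ => z + t • X := by fun_prop
  exact eventually_closedBall_subset (hline.continuousAt.preimage_mem_nhds
    (hD.mem_nhds (by simpa using hz)))

theorem IsGreenCandidate.pole_line (hu : IsGreenCandidate D z u) (hD : IsOpen D) (hz : z ∈ D)
    (hX : X ≠ 0) : ∃ C : ℝ, ∀ᶠ l : ℂ in 𝓝[≠] 0, u (z + l • X) ≤ (Real.log ‖l‖ + C : ℝ) := by
  obtain ⟨C, hC⟩ := hu.pole
  have hline : Continuous fun l : ℂ => z + l • X := by fun_prop
  have hlim : Tendsto (fun l : ℂ => z + l • X) (𝓝[≠] 0) (𝓝[D] z) := by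
    rw [hD.nhdsWithin_eq hz]
    exact (hline.tendsto' 0 z (by simp)).mono_left nhdsWithin_le_nhds
  refine ⟨Real.log ‖X‖ + C, ?_⟩
  filter_upwards [hlim.eventually hC, self_mem_nhdsWithin] with l hl hl0
  rwa [add_sub_cancel_left, norm_smul, Real.log_mul (norm_ne_zero_iff.2 hl0)
    (norm_ne_zero_iff.2 hX), add_assoc] at hl

theorem IsGreenCandidate.le_log_norm_add (hu : IsGreenCandidate D z u) (hD : IsOpen D)
    (hX : X ≠ 0) (hdisc : ∀ l ∈ closedBall (0 : ℂ) s, z + l • X ∈ D) {h : ℂ → ℝ}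
    (hh : HarmonicOnNhd h (closedBall 0 s))
    (huh : ∀ l ∈ sphere (0 : ℂ) s, u (z + l • X) ≤ (Real.log s + h l : ℝ)) {l : ℂ}
    (hl : 0 < ‖l‖) (hls : ‖l‖ ≤ s) : u (z + l • X) ≤ (Real.log ‖l‖ + h l : ℝ) := by
  have hz : z ∈ D := by simpa using hdisc 0 (mem_closedBall_self (hl.le.trans hls))
  obtain ⟨C, hC⟩ := hu.pole_line hD hz hX
  exact ((hu.pshOn.subharmonicOn_line z X).mono hdisc).le_log_norm_add
    (fun w hw => (hu.neg _ (hdisc w hw)).trans EReal.zero_lt_top) hC hh huh hl hls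

theorem greenFn_line_le (hD : IsOpen D) (hX : X ≠ 0)
    (hdisc : ∀ l ∈ closedBall (0 : ℂ) s, z + l • X ∈ D) {l : ℂ} (hl : 0 < ‖l‖) (hls : ‖l‖ ≤ s) :
    greenFn D z (z + l • X) ≤ (Real.log ‖l‖ - Real.log s : ℝ) := by
  refine greenFn_le_iff.2 fun u hu => ?_
  refine hu.le_log_norm_add hD hX hdisc (harmonicOnNhd_const _) (fun w hw => ?_) hl hls
  simpa using (hu.neg _ (hdisc w (sphere_subset_closedBall hw))).le

-- `u` lies below `Re P ≤ min 0 (c - ψ)` on the circle for some entire `P`; the bound `Re P ≤ c - a`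
-- at the centre spreads by Harnack's inequality, losing only a factor that tends to `1` as `l → 0`.
theorem IsGreenCandidate.le_of_add_lt (hu : IsGreenCandidate D z u) (hD : IsOpen D) (hX : X ≠ 0)
    {W : Set (Cn n)} (hWD : W ⊆ D) {ψ : Cn n → EReal} (hψ : PSHOn ψ W) (hψtop : ∀ x ∈ W, ψ x < ⊤)
    {a c : ℝ} (ha : a ≤ ψ z) (hdisc : ∀ l ∈ closedBall (0 : ℂ) s, z + l • X ∈ W)
    (hc : ∀ l ∈ sphere (0 : ℂ) s, u (z + l • X) + ψ (z + l • X) < c) {l : ℂ} (hl : 0 < ‖l‖)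
    (hls : ‖l‖ < s) :
    u (z + l • X) ≤
      (Real.log ‖l‖ + ((s - ‖l‖) / (s + ‖l‖) * (c - a) - Real.log s) : ℝ) := by
  have hs : 0 < s := hl.trans hls
  have hW (w : ℂ) (hw : w ∈ sphere 0 s) : z + w • X ∈ W := hdisc w (sphere_subset_closedBall hw)
  have hline : ContinuousOn (fun w : ℂ => z + w • X) (sphere 0 s) := by fun_prop
  have hutop (w : ℂ) (hw : w ∈ sphere 0 s) : u (z + w • X) ≠ ⊤ :=
    ((hu.neg _ (hWD (hW w hw))).trans EReal.zero_lt_top).ne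
  obtain ⟨P, hP, huP⟩ := exists_entire_re_between (f := fun w : ℂ => u (z + w • X))
    (h := fun w : ℂ => min 0 ((c : EReal) - ψ (z + w • X))) hs
    (hu.pshOn.1.comp hline fun w hw => hWD (hW w hw))
    (lowerSemicontinuousOn_const.inf
      (lowerSemicontinuousOn_coe_sub continuousOn_const (hψ.1.comp hline hW)))
    fun w hw => lt_min (hu.neg _ (hWD (hW w hw))) <|
      (EReal.lt_sub_iff_add_lt (.inr (hutop w hw)) (.inl (hψtop _ (hW w hw)).ne)).2 (hc w hw)
  have hPh : HarmonicOnNhd (fun w => (P w).re) (closedBall 0 s) :=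
    fun w _ => (hP.analyticAt w).harmonicAt_re
  have hψP : ψ z ≤ (c - (P 0).re : ℝ) := by
    refine (pshOn_iff_entire.1 hψ).2 z X s hs hdisc (fun w => c - P w) (by fun_prop) fun w hw => ?_
    simpa using coe_le_coe_sub_comm.1 ((huP w hw).2.le.trans (min_le_right _ _))
  have hP0 : (P 0).re ≤ c - a := by linarith [EReal.coe_le_coe_iff.1 (ha.trans hψP)]
  have hPl := harmonic_le_mul_of_nonpos_on_sphere hPh (w := l)
    (fun w hw => EReal.coe_nonpos.1 ((huP w hw).2.le.trans (min_le_left _ _))) (by simpa using hls)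
  rw [sub_zero] at hPl
  refine (hu.le_log_norm_add hD hX (fun w hw => hWD (hdisc w hw))
    (hPh.sub (harmonicOnNhd_const (Real.log s))) (fun w hw => ?_) hl hls.le).trans
    (EReal.coe_le_coe ?_)
  · simpa using (huP w hw).1.le
  · have : 0 ≤ (s - ‖l‖) / (s + ‖l‖) := div_nonneg (by linarith) (by linarith)
    simp only [Pi.sub_apply]
    nlinarith

end GreenFunction

section Azukawa

variable {n : ℕ} {D : Set (Cn n)} {z X : Cn n}

theorem erexp_nonneg (x : EReal) : 0 ≤ erexp x := by
  unfold erexp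
  split_ifs <;> positivity

theorem erexp_coe (x : ℝ) : erexp x = Real.exp x := by
  simp [erexp]

theorem erexp_le_exp {x : EReal} {y : ℝ} (h : x ≤ y) : erexp x ≤ Real.exp y := by
  induction x with
  | bot => simpa [erexp] using (Real.exp_pos y).le
  | top => exact absurd h (EReal.coe_lt_top y).not_ge
  | coe x => rwa [erexp_coe, Real.exp_le_exp, ← EReal.coe_le_coe_iff]

theorem lt_coe_of_erexp_lt_exp {x : EReal} {y : ℝ} (hx : x ≠ ⊤) (h : erexp x < Real.exp y) :
    x < y := by
  induction x with
  | bot => exact EReal.bot_lt_coe y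
  | top => exact absurd rfl hx
  | coe x => rwa [erexp_coe, Real.exp_lt_exp, ← EReal.coe_lt_coe_iff] at h

theorem erexp_div_le_exp {x : EReal} {r y : ℝ} (hr : 0 < r) (h : x ≤ (Real.log r + y : ℝ)) :
    erexp x / r ≤ Real.exp y := by
  have := erexp_le_exp h
  rwa [Real.exp_add, Real.exp_log hr, ← div_le_iff₀' hr] at this

theorem isCoboundedUnder_azukawa (D : Set (Cn n)) (z X : Cn n) :
    IsCoboundedUnder (· ≤ ·) (𝓝[≠] (0 : ℂ))
      fun l : ℂ => erexp (greenFn D z (z + l • X)) / ‖l‖ :=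
  IsBoundedUnder.isCoboundedUnder_le <| isBoundedUnder_of
    ⟨0, fun _ => div_nonneg (erexp_nonneg _) (norm_nonneg _)⟩

theorem isBoundedUnder_azukawa (hD : IsOpen D) (hz : z ∈ D) (hX : X ≠ 0) :
    IsBoundedUnder (· ≤ ·) (𝓝[≠] (0 : ℂ))
      fun l : ℂ => erexp (greenFn D z (z + l • X)) / ‖l‖ := by
  have hev : ∀ᶠ s in 𝓝[>] (0 : ℝ), ∀ l ∈ closedBall (0 : ℂ) s, z + l • X ∈ D :=
    (eventually_closedBall_line_mem hD hz X).filter_mono nhdsWithin_le_nhds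
  obtain ⟨s, hdisc, hs⟩ := (hev.and self_mem_nhdsWithin).exists
  refine isBoundedUnder_of_eventually_le (a := Real.exp (-Real.log s)) ?_
  filter_upwards [self_mem_nhdsWithin, nhdsWithin_le_nhds (closedBall_mem_nhds (0 : ℂ) hs)]
    with l hl0 hls
  exact erexp_div_le_exp (norm_pos_iff.2 hl0) <|
    greenFn_line_le hD hX hdisc (norm_pos_iff.2 hl0) (mem_closedBall_zero_iff.1 hls)

theorem azukawa_nonneg (hD : IsOpen D) (hz : z ∈ D) (hX : X ≠ 0) : 0 ≤ azukawa D z X :=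
  le_limsup_of_frequently_le
    (Frequently.of_forall fun _ => div_nonneg (erexp_nonneg _) (norm_nonneg _))
    (isBoundedUnder_azukawa hD hz hX)

-- If `erexp (greenFn D z z) > 0`, the quotient tends to `∞` and its real-valued `limsup` is the
-- junk value `0`.
theorem azukawa_zero_right (D : Set (Cn n)) (z : Cn n) : azukawa D z 0 = 0 := by
  simp only [azukawa, smul_zero, add_zero]
  rcases (erexp_nonneg (greenFn D z z)).eq_or_lt with h | h
  · simp [← h]
  · have hlim : Tendsto (fun l : ℂ => erexp (greenFn D z z) / ‖l‖) (𝓝[≠] 0) atTop :=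
      (tendsto_inv_nhdsGT_zero.comp tendsto_norm_nhdsNE_zero).const_mul_atTop h
    exact Real.limsup_of_not_isBoundedUnder (not_isBoundedUnder_of_tendsto_atTop hlim)

theorem exists_greenFn_lt_on_sphere (hD : IsOpen D) (hX : X ≠ 0) {W : Set (Cn n)}
    (hW : IsOpen W) (hWD : W ⊆ D) (hz : z ∈ W) {B : ℝ} (hB : azukawa D z X < B) :
    ∃ s > 0, (∀ l ∈ closedBall (0 : ℂ) s, z + l • X ∈ W) ∧
      ∀ l ∈ sphere (0 : ℂ) s, greenFn D z (z + l • X) < Real.log (B * s) := by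
  have hB0 : 0 < B := (azukawa_nonneg hD (hWD hz) hX).trans_lt hB
  have hev := eventually_nhdsWithin_iff.1
    (eventually_lt_of_limsup_lt hB (isBoundedUnder_azukawa hD (hWD hz) hX))
  have hev' : ∀ᶠ s in 𝓝[>] (0 : ℝ), (∀ l ∈ closedBall (0 : ℂ) s, z + l • X ∈ W) ∧
      ∀ l ∈ closedBall (0 : ℂ) s, l ∈ ({0}ᶜ : Set ℂ) →
        erexp (greenFn D z (z + l • X)) / ‖l‖ < B :=
    ((eventually_closedBall_line_mem hW hz X).and
      (eventually_closedBall_subset hev)).filter_mono nhdsWithin_le_nhds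
  obtain ⟨s, ⟨hdisc, hlt⟩, hs⟩ := (hev'.and self_mem_nhdsWithin).exists
  refine ⟨s, hs, hdisc, fun l hl => ?_⟩
  have hls : ‖l‖ = s := mem_sphere_zero_iff_norm.1 hl
  have hl0 : 0 < ‖l‖ := hls ▸ hs
  have hne_top : greenFn D z (z + l • X) ≠ ⊤ :=
    ((greenFn_line_le hD hX (fun w hw => hWD (hdisc w hw)) hl0 hls.le).trans_lt
      (EReal.coe_lt_top _)).ne
  refine lt_coe_of_erexp_lt_exp hne_top ?_
  have := hlt l (sphere_subset_closedBall hl) (norm_pos_iff.1 hl0)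
  rwa [Real.exp_log (mul_pos hB0 hs), ← div_lt_iff₀ hs, ← hls]

theorem tendsto_sub_norm_div_add_norm {s : ℝ} (hs : s ≠ 0) :
    Tendsto (fun l : ℂ => (s - ‖l‖) / (s + ‖l‖)) (𝓝 0) (𝓝 1) := by
  have hcont : ContinuousAt (fun l : ℂ => (s - ‖l‖) / (s + ‖l‖)) 0 :=
    ContinuousAt.div (by fun_prop) (by fun_prop) (by simpa using hs)
  simpa [hs] using hcont.tendsto

theorem exp_mul_azukawa_le {E W : Set (Cn n)} (hD : IsOpen D) (hE : IsOpen E) (hW : IsOpen W)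
    (hWD : W ⊆ D) (hWE : W ⊆ E) (hz : z ∈ W) {ψ : Cn n → EReal} (hψ : PSHOn ψ W)
    (hψtop : ∀ x ∈ W, ψ x < ⊤) {a : ℝ} (ha : a ≤ ψ z)
    (hg : ∀ u, IsGreenCandidate E z u → ∀ w ∈ W, u w + ψ w ≤ greenFn D z w) :
    Real.exp a * azukawa E z X ≤ azukawa D z X := by
  rcases eq_or_ne X 0 with rfl | hX
  · simp [azukawa_zero_right]
  refine le_of_forall_gt_imp_ge_of_dense fun B hB => ?_
  have hB0 : 0 < B := (azukawa_nonneg hD (hWD hz) hX).trans_lt hB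
  obtain ⟨s, hs, hdisc, hc⟩ := exists_greenFn_lt_on_sphere hD hX hW hWD hz hB
  have hbound : ∀ᶠ l : ℂ in 𝓝[≠] 0, erexp (greenFn E z (z + l • X)) / ‖l‖ ≤
      Real.exp ((s - ‖l‖) / (s + ‖l‖) * (Real.log (B * s) - a) - Real.log s) := by
    filter_upwards [self_mem_nhdsWithin, nhdsWithin_le_nhds (ball_mem_nhds (0 : ℂ) hs)]
      with l hl0 hls
    replace hl0 : 0 < ‖l‖ := norm_pos_iff.2 hl0
    refine erexp_div_le_exp hl0 (greenFn_le_iff.2 fun u hu => ?_)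
    refine hu.le_of_add_lt hE hX hWE hψ hψtop ha hdisc (fun w hw => ?_) hl0
      (mem_ball_zero_iff.1 hls)
    exact (hg u hu _ (hdisc w (sphere_subset_closedBall hw))).trans_lt (hc w hw)
  have hlim : Tendsto (fun l : ℂ => Real.exp
      ((s - ‖l‖) / (s + ‖l‖) * (Real.log (B * s) - a) - Real.log s)) (𝓝[≠] 0)
      (𝓝 (B / Real.exp a)) := by
    have h := ((tendsto_sub_norm_div_add_norm hs.ne').mul_const (Real.log (B * s) - a)).sub_const
      (Real.log s)
    have heq : 1 * (Real.log (B * s) - a) - Real.log s = Real.log B - a := by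
      rw [Real.log_mul hB0.ne' hs.ne']
      ring
    rw [heq] at h
    simpa only [Real.exp_sub (Real.log B), Real.exp_log hB0] using
      h.rexp.mono_left nhdsWithin_le_nhds
  rw [← le_div_iff₀' (Real.exp_pos a)]
  exact (limsup_le_limsup hbound (isCoboundedUnder_azukawa E z X)
    hlim.isBoundedUnder_le).trans_eq hlim.limsup_eq

end Azukawa

section GreenCandidates

variable {n : ℕ} {D : Set (Cn n)} {z : Cn n} {u : Cn n → EReal}

theorem IsGreenCandidate.mono {E : Set (Cn n)} (hu : IsGreenCandidate D z u) (h : E ⊆ D) :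
    IsGreenCandidate E z u where
  pshOn := hu.pshOn.mono h
  neg x hx := hu.neg x (h hx)
  pole := hu.pole.imp fun _ hC => hC.filter_mono (nhdsWithin_mono z h)

theorem isGreenCandidate_logDist {R : ℝ} (hR : 0 < R) (hD : ∀ x ∈ D, ‖x - z‖ < R) :
    IsGreenCandidate D z (logDist z R) where
  pshOn := pshOn_logDist hR
  neg x hx := logDist_lt_zero hR (hD x hx)
  pole := by
    refine ⟨-Real.log R, Eventually.of_forall fun x => ?_⟩
    rcases eq_or_ne x z with rfl | hxz
    · simp [logDist]
    · exact (logDist_of_ne hR hxz).le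

theorem IsGreenCandidate.max {u' : Cn n → EReal} (hu : IsGreenCandidate D z u)
    (hu' : IsGreenCandidate D z u') : IsGreenCandidate D z fun x => u x ⊔ u' x where
  pshOn := hu.pshOn.max hu'.pshOn
  neg x hx := max_lt (hu.neg x hx) (hu'.neg x hx)
  pole := by
    obtain ⟨C, hC⟩ := hu.pole
    obtain ⟨C', hC'⟩ := hu'.pole
    refine ⟨C ⊔ C', ?_⟩
    filter_upwards [hC, hC'] with x hx hx'
    refine max_le (hx.trans ?_) (hx'.trans ?_) <;> gcongr <;> simp

theorem IsGreenCandidate.add_neg {ψ : Cn n → EReal} (hu : IsGreenCandidate D z u)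
    (hψ : PSHOn ψ D) (hneg : ∀ x ∈ D, ψ x < 0) : IsGreenCandidate D z fun x => u x + ψ x where
  pshOn := hu.pshOn.add hψ (fun x hx => (hu.neg x hx).trans EReal.zero_lt_top)
    fun x hx => (hneg x hx).trans EReal.zero_lt_top
  neg x hx := by simpa using EReal.add_lt_add (hu.neg x hx) (hneg x hx)
  pole := by
    obtain ⟨C, hC⟩ := hu.pole
    refine ⟨C, ?_⟩
    filter_upwards [hC, self_mem_nhdsWithin] with x hx hxD
    simpa using add_le_add hx (hneg x hxD).le

end GreenCandidates

section Localization

variable {n : ℕ} {D : Set (Cn n)} {p z : Cn n} {φ u : Cn n → EReal} {ρ r c : ℝ}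

theorem IsPshPeakFn.neg (hφ : IsPshPeakFn D p φ) (hp : p ∉ D) {x : Cn n} (hx : x ∈ D) :
    φ x < 0 := by
  obtain ⟨c, hc, hle⟩ := hφ.2.2 {x}ᶜ (isOpen_compl_singleton.mem_nhds fun h => hp (h ▸ hx))
  exact (hle x ⟨hx, by simp⟩).trans_lt (EReal.coe_neg'.2 hc)

theorem IsPshPeakFn.exists_radius (hφ : IsPshPeakFn D p φ) (hr : 0 < r) :
    ∃ c > 0, ∃ ρ > 0, ρ ≤ r ∧ (∀ x ∈ D \ ball p r, φ x ≤ (-c : ℝ)) ∧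
      ∀ x ∈ D ∩ ball p ρ, (-(c / 2) : ℝ) ≤ φ x := by
  obtain ⟨c, hc, hfar⟩ := hφ.2.2 _ (ball_mem_nhds p hr)
  have hnear : ∀ᶠ x in 𝓝[D] p, ((c / 2 : ℝ) : EReal) < φ x :=
    hφ.2.1.eventually (lt_mem_nhds (EReal.coe_neg'.2 (by linarith)))
  obtain ⟨ρ, hρ, hball⟩ := mem_nhdsWithin_iff.1 hnear
  refine ⟨-c, neg_pos.2 hc, min ρ r, lt_min hρ hr, min_le_right _ _, by simpa using hfar,
    fun x hx => ?_⟩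
  rw [neg_div, neg_neg]
  exact (hball ⟨ball_subset_ball (min_le_left _ _) hx.2, hx.1⟩).le

theorem PSHOn.exists_extension_of_const_compare {w : Cn n → EReal} {b : EReal} {L ρ₀ r₀ : ℝ}
    (hD : IsOpen D) (hw : PSHOn w (D ∩ ball p r)) (hwb : ∀ x ∈ D ∩ ball p r, w x < b)
    (hLb : L < b) (hρ₀ : ρ₀ < ρ) (hρr₀ : ρ ≤ r₀) (hr₀ : r₀ < r)
    (hLw : ∀ x ∈ D ∩ ball p ρ, x ∉ closedBall p ρ₀ → L ≤ w x)
    (hwL : ∀ x ∈ D ∩ ball p r, x ∉ closedBall p r₀ → w x ≤ L) :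
    ∃ v, PSHOn v D ∧ (∀ x ∈ D, v x < b) ∧ EqOn v w (ball p ρ) := by
  have hρr : ball p ρ ⊆ ball p r := ball_subset_ball (hρr₀.trans hr₀.le)
  let v := (ball p ρ).piecewise w ((ball p r).piecewise (fun x => w x ⊔ L) fun _ => L)
  have hvw : EqOn v w (ball p ρ) := piecewise_eqOn _ _ _
  have hv_mid (x : Cn n) (hx : x ∈ ball p r) (hxρ : x ∉ ball p ρ) : v x = w x ⊔ L := by
    simp only [v, piecewise_eq_of_notMem _ _ _ hxρ, piecewise_eq_of_mem _ _ _ hx]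
  have hv_out (x : Cn n) (hx : x ∉ ball p r) : v x = L := by
    simp only [v, piecewise_eq_of_notMem _ _ _ hx, piecewise_eq_of_notMem _ _ _ fun h => hx (hρr h)]
  have hvb (x : Cn n) (hx : x ∈ D) : v x < b := by
    by_cases hxρ : x ∈ ball p ρ
    · exact hvw hxρ ▸ hwb x ⟨hx, hρr hxρ⟩
    by_cases hxr : x ∈ ball p r
    · exact hv_mid x hxr hxρ ▸ max_lt (hwb x ⟨hx, hxr⟩) hLb
    · exact hv_out x hxr ▸ hLb
  refine ⟨v, .of_locally (fun x hx => (hvb x hx).trans_le le_top) fun x hx => ?_, hvb, hvw⟩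
  by_cases hxρ : x ∈ ball p ρ
  · exact ⟨D ∩ ball p ρ, (hD.inter isOpen_ball).mem_nhds ⟨hx, hxρ⟩,
      (hw.mono (inter_subset_inter_right D hρr)).congr fun y hy => hvw hy.2⟩
  by_cases hxr : x ∈ ball p r
  · refine ⟨(D ∩ ball p r) \ closedBall p ρ₀,
      ((hD.inter isOpen_ball).sdiff isClosed_closedBall).mem_nhds
        ⟨⟨hx, hxr⟩, fun h => hxρ (closedBall_subset_ball hρ₀ h)⟩,
      ((hw.mono sdiff_subset).max (pshOn_const L)).congr fun y hy => ?_⟩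
    by_cases hyρ : y ∈ ball p ρ
    · exact (hvw hyρ).trans (max_eq_left (hLw y ⟨hy.1.1, hyρ⟩ hy.2)).symm
    · exact hv_mid y hy.1.2 hyρ
  · refine ⟨D \ closedBall p r₀, (hD.sdiff isClosed_closedBall).mem_nhds
      ⟨hx, fun h => hxr (closedBall_subset_ball hr₀ h)⟩, (pshOn_const L).congr fun y hy => ?_⟩
    by_cases hyr : y ∈ ball p r
    · rw [hv_mid y hyr fun h => hy.2 (ball_subset_closedBall (ball_subset_ball hρr₀ h)),
        max_eq_right (hwL y ⟨hy.1, hyr⟩ hy.2)]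
    · exact hv_out y hyr

theorem IsGreenCandidate.exists_extension {w : Cn n → EReal} {L ρ₀ r₀ : ℝ} (hD : IsOpen D)
    (hw : IsGreenCandidate (D ∩ ball p r) z w) (hz : z ∈ D ∩ ball p ρ) (hL : L < 0)
    (hρ₀ : ρ₀ < ρ) (hρr₀ : ρ ≤ r₀) (hr₀ : r₀ < r)
    (hLw : ∀ x ∈ D ∩ ball p ρ, x ∉ closedBall p ρ₀ → L ≤ w x)
    (hwL : ∀ x ∈ D ∩ ball p r, x ∉ closedBall p r₀ → w x ≤ L) :
    ∃ v, IsGreenCandidate D z v ∧ EqOn v w (ball p ρ) := by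
  obtain ⟨v, hv, hneg, hvw⟩ := hw.pshOn.exists_extension_of_const_compare hD hw.neg
    (EReal.coe_neg'.2 hL) hρ₀ hρr₀ hr₀ hLw hwL
  refine ⟨v, ⟨hv, hneg, hw.pole.imp fun C hC => ?_⟩, hvw⟩
  have hzr : ball p r ∈ 𝓝 z := isOpen_ball.mem_nhds (ball_subset_ball (hρr₀.trans hr₀.le) hz.2)
  rw [nhdsWithin_inter_of_mem' (nhdsWithin_le_nhds hzr)] at hC
  filter_upwards [hC, nhdsWithin_le_nhds (isOpen_ball.mem_nhds hz.2)] with x hx hxρ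
  rwa [hvw hxρ]

theorem neg_log_le_logDist_of_notMem_closedBall {x : Cn n} (hρ : 0 < ρ) (hr : 0 < r)
    (hz : z ∈ ball p (ρ / 4)) (hx : x ∉ closedBall p (ρ / 2)) :
    (-Real.log (8 * r / ρ) : ℝ) ≤ logDist z (2 * r) x := by
  have hxz : ρ / 4 ≤ ‖x - z‖ := by
    have hxp : ρ / 2 < dist x p := not_le.1 hx
    rw [← dist_eq_norm]
    linarith [dist_triangle x z p, mem_ball.1 hz]
  have hratio : (8 * r / ρ)⁻¹ = ρ / 4 / (2 * r) := by
    field_simp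
    norm_num
  rw [← Real.log_inv, hratio]
  exact log_div_le_logDist (by positivity) (by positivity) hxz

theorem IsGreenCandidate.add_mul_le_greenFn {m : ℝ} (hD : IsOpen D) (hφ : PSHOn φ D)
    (hφneg : ∀ x ∈ D, φ x < 0) (hρ : 0 < ρ) (hρr : ρ ≤ r / 2) (hc : 0 < c)
    (hfar : ∀ x ∈ D \ ball p (r / 2), φ x ≤ (-c : ℝ))
    (hnear : ∀ x ∈ D ∩ ball p ρ, (-(c / 2) : ℝ) ≤ φ x) (hm : 0 < m)
    (hmc : Real.log (8 * r / ρ) ≤ m * c / 2) (hz : z ∈ D ∩ ball p (ρ / 4))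
    (hu : IsGreenCandidate (D ∩ ball p r) z u) {x : Cn n} (hx : x ∈ D ∩ ball p ρ) :
    u x + m * φ x ≤ greenFn D z x := by
  have hr : 0 < 2 * r := by linarith
  have hlog : IsGreenCandidate (D ∩ ball p r) z (logDist z (2 * r)) :=
    isGreenCandidate_logDist hr fun y hy => by
      rw [← dist_eq_norm]
      linarith [dist_triangle y p z, mem_ball.1 hy.2, mem_ball'.1 hz.2]
  have hmφneg (y : Cn n) (hy : y ∈ D) : (m : EReal) * φ y < 0 :=
    EReal.mul_neg_iff.2 (.inl ⟨EReal.coe_pos.2 hm, hφneg y hy⟩)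
  have hw := (hu.max hlog).add_neg ((hφ.mono inter_subset_left).coe_mul hm)
    fun y hy => hmφneg y hy.1
  have hw_near (y : Cn n) (hy : y ∈ D ∩ ball p ρ) (hyρ : y ∉ closedBall p (ρ / 2)) :
      ((-(m * c) : ℝ) : EReal) ≤ (u y ⊔ logDist z (2 * r) y) + m * φ y := by
    have hlog_le : ((-(m * c / 2) : ℝ) : EReal) ≤ logDist z (2 * r) y :=
      (EReal.coe_le_coe (neg_le_neg hmc)).trans
        (neg_log_le_logDist_of_notMem_closedBall hρ (by linarith) hz.2 hyρ)
    have hmφ : ((-(m * c / 2) : ℝ) : EReal) ≤ m * φ y := by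
      convert mul_le_mul_of_nonneg_left (hnear y hy) (EReal.coe_nonneg.2 hm.le) using 1
      rw [← EReal.coe_mul]
      ring_nf
    convert add_le_add (hlog_le.trans (le_max_right (u y) _)) hmφ using 1
    norm_cast
    ring
  have hw_far (y : Cn n) (hy : y ∈ D ∩ ball p r) (hyr : y ∉ closedBall p (r / 2)) :
      (u y ⊔ logDist z (2 * r) y) + m * φ y ≤ (-(m * c) : ℝ) := by
    have hmφ : (m : EReal) * φ y ≤ (-(m * c) : ℝ) := by
      convert mul_le_mul_of_nonneg_left (hfar y ⟨hy.1, fun h => hyr (ball_subset_closedBall h)⟩)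
        (EReal.coe_nonneg.2 hm.le) using 1
      rw [← EReal.coe_mul, mul_neg]
    simpa using add_le_add ((hu.max hlog).neg y hy).le hmφ
  obtain ⟨v, hv, hvw⟩ := hw.exists_extension hD ⟨hz.1, ball_subset_ball (by linarith) hz.2⟩
    (neg_neg_of_pos (mul_pos hm hc)) (half_lt_self hρ) hρr (by linarith) hw_near hw_far
  calc u x + m * φ x ≤ (u x ⊔ logDist z (2 * r) x) + m * φ x := by gcongr; exact le_sup_left
    _ = v x := (hvw hx.2).symm
    _ ≤ greenFn D z x := hv.le_greenFn x

end Localization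

theorem azukawa_localization_peak_general {n : ℕ} {D : Set (Cn n)} (hD : IsOpen D) {p : Cn n}
    (hp : p ∈ frontier D) {φ : Cn n → EReal} (hφ : IsPshPeakFn D p φ) {U : Set (Cn n)}
    (hU : IsOpen U) (hpU : p ∈ U) :
    ∃ V : Set (Cn n), IsOpen V ∧ p ∈ V ∧ V ⊆ U ∧ ∃ m : ℝ, 0 < m ∧
      ∀ z ∈ D ∩ V, ∀ X : Cn n,
        azukawa D z X ≥ erexp ((m : EReal) * φ z) * azukawa (D ∩ U) z X := by
  have hneg (x : Cn n) (hx : x ∈ D) : φ x < 0 := hφ.neg (hD.frontier_eq ▸ hp).2 hx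
  obtain ⟨r, hr, hrU⟩ := isOpen_iff.1 hU p hpU
  obtain ⟨c, hc, ρ, hρ, hρr, hfar, hnear⟩ := hφ.exists_radius (half_pos hr)
  have hρU : ball p ρ ⊆ U := (ball_subset_ball (by linarith)).trans hrU
  have hV : ball p (ρ / 4) ⊆ ball p ρ := ball_subset_ball (by linarith)
  have hlog : 0 < Real.log (8 * r / ρ) := Real.log_pos ((one_lt_div hρ).2 (by linarith))
  set m := 2 * Real.log (8 * r / ρ) / c with hm_def
  have hm : 0 < m := by positivity
  refine ⟨ball p (ρ / 4), isOpen_ball, mem_ball_self (by positivity), hV.trans hρU, m, hm,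
    fun z hz X => ?_⟩
  have hz' : z ∈ D ∩ ball p ρ := ⟨hz.1, hV hz.2⟩
  lift φ z to ℝ using ⟨((hneg z hz.1).trans EReal.zero_lt_top).ne,
    ((EReal.bot_lt_coe _).trans_le (hnear z hz')).ne'⟩ with a ha
  rw [← EReal.coe_mul, erexp_coe]
  refine exp_mul_azukawa_le hD (hD.inter hU) (hD.inter isOpen_ball) inter_subset_left
    (inter_subset_inter_right D hρU) hz' ((hφ.1.mono inter_subset_left).coe_mul hm)
    (fun x hx => ?_) (by rw [← ha, EReal.coe_mul]) fun u hu x hx => ?_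
  · exact (EReal.mul_neg_iff.2 (.inl ⟨EReal.coe_pos.2 hm, hneg x hx.1⟩)).trans EReal.zero_lt_top
  · exact (hu.mono (inter_subset_inter_right D hrU)).add_mul_le_greenFn hD hφ.1 hneg hρ hρr hc hfar
      hnear hm (by rw [hm_def]; field_simp; rfl) hz hx

/-- Quantitative localization of the Azukawa metric near a psh peak
boundary point. -/
theorem azukawa_localization_peak {n : ℕ} (D : Set (Cn n)) (hD : IsOpen D)
    (hDconn : IsConnected D) (p : Cn n) (hp : p ∈ frontier D)
    (φ : Cn n → EReal) (hφ : IsPshPeakFn D p φ)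
    (U : Set (Cn n)) (hU : IsOpen U) (hUb : Bornology.IsBounded U) (hpU : p ∈ U) :
    ∃ V : Set (Cn n), IsOpen V ∧ p ∈ V ∧ V ⊆ U ∧ ∃ m : ℝ, 0 < m ∧
      ∀ z ∈ D ∩ V, ∀ X : Cn n,
        azukawa D z X ≥ erexp ((m : EReal) * φ z) * azukawa (D ∩ U) z X :=
  azukawa_localization_peak_general hD hp hφ hU hpU
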